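/- The quotient ring T = ℂ[[x,y,z]]/(x² − yz), the formal power series ring in three variables over the complex numbers modulo the principal ideal generated by x² − yz, is an integral domain. -/

import Mathlib

/-!
The ring `ℂ[[x,y,z]]/(x² − yz)` embeds into the domain `ℂ[[s,t]]` through the parametrization
`x ↦ st`, `y ↦ s²`, `z ↦ t²` of the quadric cone: the principal ideal `(x² − yz)` is exactly the
kernel of this substitution, hence prime.

To see that a series `f` in the kernel is divisible by `x² − yz`, note that two monomials
`xⁱyʲzᵏ` have the same image `sⁱ⁺²ʲtⁱ⁺²ᵏ` exactly when they differ by a power of `x²/(yz)`.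
So `f` is in the kernel iff its coefficients sum to zero along each finite chain
`xⁱyʲzᵏ, xⁱ⁺²yʲ⁻¹zᵏ⁻¹, …` (with `i < 2`), see `sum_chain_eq_zero`. The tail sums along the chains
are then the coefficients of the quotient of `f` by `x² − yz`, by telescoping.
-/

namespace QuadricCone

open MvPowerSeries

/-- The exponent of the monomial `xⁱyʲzᵏ`. -/
noncomputable def expo (i j k : ℕ) : Fin 3 →₀ ℕ := Finsupp.equivFunOnFinite.symm ![i, j, k]

/-- The exponent of the monomial `sᵖtᵠ`. -/
noncomputable def expo₂ (p q : ℕ) : Fin 2 →₀ ℕ := Finsupp.equivFunOnFinite.symm ![p, q]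

@[simp] lemma expo_zero (i j k : ℕ) : expo i j k 0 = i := rfl
@[simp] lemma expo_one (i j k : ℕ) : expo i j k 1 = j := rfl
@[simp] lemma expo_two (i j k : ℕ) : expo i j k 2 = k := rfl
@[simp] lemma expo₂_zero (p q : ℕ) : expo₂ p q 0 = p := rfl
@[simp] lemma expo₂_one (p q : ℕ) : expo₂ p q 1 = q := rfl

lemma eq_expo (d : Fin 3 →₀ ℕ) : d = expo (d 0) (d 1) (d 2) := by
  ext s; fin_cases s <;> rfl

lemma expo₂_inj {p q p' q' : ℕ} : expo₂ p q = expo₂ p' q' ↔ p = p' ∧ q = q' := by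
  constructor
  · intro h
    exact ⟨DFunLike.congr_fun h 0, DFunLike.congr_fun h 1⟩
  · rintro ⟨rfl, rfl⟩; rfl

/-- The parametrization `x ↦ st`, `y ↦ s²`, `z ↦ t²` of the quadric cone. -/
noncomputable def param : Fin 3 → MvPowerSeries (Fin 2) ℂ :=
  ![monomial (expo₂ 1 1) 1, monomial (expo₂ 2 0) 1, monomial (expo₂ 0 2) 1]

lemma hasSubst_param : HasSubst param := by
  classical
  refine hasSubst_of_constantCoeff_zero fun s => ?_
  rw [← coeff_zero_eq_constantCoeff_apply]
  have h0 : (0 : Fin 2 →₀ ℕ) = expo₂ 0 0 := by ext s; fin_cases s <;> rfl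
  fin_cases s <;> simp [param, coeff_monomial, h0, expo₂_inj, -coeff_zero_eq_constantCoeff]

lemma prod_param (d : Fin 3 →₀ ℕ) :
    (d.prod fun s e => param s ^ e) = monomial (expo₂ (d 0 + 2 * d 1) (d 0 + 2 * d 2)) 1 := by
  rw [Finsupp.prod_fintype _ _ (by simp), Fin.prod_univ_three]
  simp only [param, Matrix.cons_val, monomial_pow, monomial_mul_monomial, one_pow, mul_one]
  congr 2
  ext s; fin_cases s <;> simp [mul_comm]

/-- The coefficients of a series in the kernel of the parametrization sum to zero along the chain
of all monomials with the same image as `xⁱyʲzᵏ`, where `i < 2`. -/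
lemma sum_chain_eq_zero {f : MvPowerSeries (Fin 3) ℂ} (hf : subst param f = 0)
    {i : ℕ} (hi : i < 2) (j k : ℕ) :
    ∑ l ∈ Finset.range (min j k + 1), coeff (expo (i + 2 * l) (j - l) (k - l)) f = 0 := by
  classical
  have h := congrArg (coeff (expo₂ (i + 2 * j) (i + 2 * k))) hf
  rw [coeff_subst hasSubst_param] at h
  simp only [prod_param, coeff_monomial, expo₂_inj, map_zero] at h
  rw [finsum_eq_finsetSum_of_support_subset
    (s := (Finset.range (min j k + 1)).image fun l => expo (i + 2 * l) (j - l) (k - l)),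
    Finset.sum_image] at h
  · rw [← h]
    refine Finset.sum_congr rfl fun l hl => ?_
    rw [Finset.mem_range] at hl
    rw [if_pos]
    · simp
    · simp only [expo_zero, expo_one, expo_two]
      omega
  · intro l _ l' _ hll
    have := DFunLike.congr_fun hll 0
    simp only [expo_zero] at this
    omega
  · intro d hd
    rw [Function.mem_support] at hd
    have hd' : i + 2 * j = d 0 + 2 * d 1 ∧ i + 2 * k = d 0 + 2 * d 2 := by
      by_contra hne
      exact hd (by rw [if_neg hne, smul_zero])
    -- Both `i` and `d 0` have the same parity and `i` is the least such natural number.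
    simp only [Finset.coe_image, Set.mem_image, Finset.mem_coe, Finset.mem_range]
    refine ⟨d 0 / 2, by omega, ?_⟩
    conv_rhs => rw [eq_expo d]
    congr 1 <;> omega

/-- The candidate for the quotient of `f` by `x² − yz`. -/
noncomputable def quot (f : MvPowerSeries (Fin 3) ℂ) : MvPowerSeries (Fin 3) ℂ := fun d =>
  ∑ l ∈ Finset.range (min (d 1) (d 2) + 1),
    coeff (expo (d 0 + 2 + 2 * l) (d 1 - l) (d 2 - l)) f

lemma coeff_quot (f : MvPowerSeries (Fin 3) ℂ) (i j k : ℕ) :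
    coeff (expo i j k) (quot f) =
      ∑ l ∈ Finset.range (min j k + 1), coeff (expo (i + 2 + 2 * l) (j - l) (k - l)) f := rfl

lemma quadric_eq : (X 0 : MvPowerSeries (Fin 3) ℂ) ^ 2 - X 1 * X 2 =
    monomial (expo 2 0 0) 1 - monomial (expo 0 1 1) 1 := by
  rw [X_pow_eq, X_def, X_def, monomial_mul_monomial, one_mul]
  congr 3 <;> ext s <;> fin_cases s <;> simp [expo]

lemma expo_le {i j k i' j' k' : ℕ} :
    expo i j k ≤ expo i' j' k' ↔ i ≤ i' ∧ j ≤ j' ∧ k ≤ k' := by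
  constructor
  · intro h
    exact ⟨h 0, h 1, h 2⟩
  · rintro ⟨h0, h1, h2⟩ s
    fin_cases s <;> assumption

lemma expo_sub (i j k i' j' k' : ℕ) :
    expo i j k - expo i' j' k' = expo (i - i') (j - j') (k - k') := by
  ext s; fin_cases s <;> rfl

lemma quadric_mul_quot {f : MvPowerSeries (Fin 3) ℂ} (hf : subst param f = 0) :
    (X 0 ^ 2 - X 1 * X 2) * quot f = f := by
  rw [quadric_eq]
  ext d
  rw [eq_expo d]
  generalize d 0 = i, d 1 = j, d 2 = k
  rw [sub_mul, map_sub, coeff_monomial_mul, coeff_monomial_mul]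
  simp only [expo_le, expo_sub, coeff_quot, one_mul, zero_le, true_and, and_true, tsub_zero]
  -- The chain starting at `xⁱyʲzᵏ` is that monomial followed by the chain of `xⁱ⁺²yʲ⁻¹zᵏ⁻¹`.
  have hstep : ∑ l ∈ Finset.range (min j k + 1), coeff (expo (i + 2 * l) (j - l) (k - l)) f =
      (if 1 ≤ j ∧ 1 ≤ k then ∑ l ∈ Finset.range (min (j - 1) (k - 1) + 1),
        coeff (expo (i + 2 + 2 * l) (j - 1 - l) (k - 1 - l)) f else 0) +
      coeff (expo i j k) f := by
    rw [Finset.sum_range_succ']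
    congr 1
    split_ifs with h
    · have hm : min (j - 1) (k - 1) + 1 = min j k := by omega
      rw [hm]
      refine Finset.sum_congr rfl fun l _ => ?_
      congr 2
      congr 1 <;> omega
    · have hm : min j k = 0 := by omega
      simp [hm]
  rcases lt_or_ge i 2 with hi | hi
  · rw [sum_chain_eq_zero hf hi] at hstep
    rw [if_neg (by omega)]
    linear_combination hstep
  · rw [if_pos hi]
    simp only [Nat.sub_add_cancel hi]
    linear_combination hstep

lemma subst_quadric : substAlgHom (R := ℂ) hasSubst_param (X 0 ^ 2 - X 1 * X 2) = 0 := by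
  rw [map_sub, map_pow, map_mul, substAlgHom_X, substAlgHom_X, substAlgHom_X, sub_eq_zero]
  simp only [param, Matrix.cons_val, monomial_pow, monomial_mul_monomial, one_pow, mul_one]
  congr 2
  ext s; fin_cases s <;> simp

end QuadricCone

open QuadricCone in
/-- The quotient ring `T = ℂ[[x,y,z]]/(x² − yz)` of the formal power series ring in
three variables over `ℂ` by the principal ideal generated by `x² − yz` is an
integral domain. -/
theorem quadric_powerSeries_quotient_isDomain :
    IsDomain
      (MvPowerSeries (Fin 3) ℂ ⧸
        Ideal.span {(MvPowerSeries.X (0 : Fin 3) : MvPowerSeries (Fin 3) ℂ) ^ 2 -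
          MvPowerSeries.X (1 : Fin 3) * MvPowerSeries.X (2 : Fin 3)}) := by
  rw [Ideal.Quotient.isDomain_iff_prime]
  have hker : Ideal.span {(MvPowerSeries.X (0 : Fin 3) : MvPowerSeries (Fin 3) ℂ) ^ 2 -
      MvPowerSeries.X (1 : Fin 3) * MvPowerSeries.X (2 : Fin 3)} =
      RingHom.ker (MvPowerSeries.substAlgHom (R := ℂ) hasSubst_param) := by
    apply le_antisymm
    · rw [Ideal.span_singleton_le_iff_mem, RingHom.mem_ker]
      exact subst_quadric
    · intro f hf
      rw [RingHom.mem_ker, MvPowerSeries.coe_substAlgHom] at hf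
      exact Ideal.mem_span_singleton.mpr ⟨quot f, (quadric_mul_quot hf).symm⟩
  rw [hker]
  have : IsDomain (MvPowerSeries (Fin 2) ℂ) := NoZeroDivisors.to_isDomain _
  exact RingHom.ker_isPrime _
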